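/- (Subadditivity of ℰ_h.) Let h ≥ 0 with h ≠ 1, and let d₁, d₂, d ∈ D_α with d = d₁ + d₂. If α = π/3 and d₂ − d₁ ∈ ℤ, assume in addition that d ∈ ℤ. Then ℰ_h(d) ≤ ℰ_h(d₁) + ℰ_h(d₂). -/

import Mathlib

/-!
Two phases whose end values fit together are put side by side at a large distance `T`. The local
part of the energy then adds up, but the stray field decays slowly, and the phases need not be at
rest outside a bounded set, so their interaction is not obviously small. The remedy is to make both
phases exactly constant near `±∞` first, at an arbitrarily small relative cost in energy.

**Collapsing the wells.** For `M > 1` there is a `C¹` map `G` (`exists_collapse`) with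
`0 ≤ G' ≤ M` which fixes `0`, `α`, `π`, is odd, commutes with `2π`-shifts, and is constant near
every well `2πn ± α`. It is the primitive of a function of `cos` that vanishes for `cos` close to
`k`. From `G θ ≤ M θ` and `π - G θ ≤ M (π - θ)` on `[0, π]`, concavity of the sine gives
`sin (G θ) ≤ M sin θ`. Hence `|cos (G x) - cos (G y)| ≤ M² |cos x - cos y|`, which controls the
potential and the stray field, so that `E (G ∘ φ) ≤ M⁴ E φ` (`Collapse.energy_comp_le`). A collapsed
phase sits exactly in a well outside some `[-A, A]`.

**Gluing.** If `ψ₁` ends at the value `L` at which `ψ₂` starts, `x ↦ ψ₁ x + (ψ₂ (x - T) - L)` is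
admissible. For collapsed phases the functions `cos ψ₁ - k` and `cos (ψ₂ (· - T)) - k` have supports
at distance at least `T - 2A`, so that the interaction is `O((T - 2A)⁻²)` (`energy_glue_le`).
Letting `T → ∞` and then `M → 1` gives the inequality for phases with matching ends
(`Einf_le_of_match`).

**Matching the ends.** The shifts `φ ↦ φ + 2πn` and the reflection `φ ↦ -φ(-·)` change neither
energy nor winding number. They make the ends match unless both phases run from `-fα` to `fα`
modulo `2π` with the same sign `f`. Then `d₁ + d₂ = N + 2fα/π` for an integer `N`, and this lies in
`D_α` only if `α ∈ {0, π/2, π/3}` (`alpha_cases`). For `α = 0` the ends match anyway; for `α = π/2`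
the external field `h` vanishes and the additional symmetry `φ ↦ φ + π` makes them match; for
`α = π/3` the winding number is `N ± 2/3`, contrary to the extra assumption.
-/

open Real MeasureTheory Filter Topology
open scoped ENNReal NNReal

noncomputable section

/-- `k = min {h, 1}`. -/
def kparam (h : ℝ) : ℝ := min h 1

/-- `α = arccos k ∈ [0, π/2]`. -/
def alphaParam (h : ℝ) : ℝ := Real.arccos (kparam h)

/-- The anisotropy potential `W_h(θ) = (1/2)(cos²θ − 2h cos θ + 2hk − k²)`. -/
def Wpot (h θ : ℝ) : ℝ :=
  (1/2) * ((Real.cos θ)^2 - 2*h*Real.cos θ + 2*h*(kparam h) - (kparam h)^2)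

/-- The set `2πℤ + {−α, α}` of allowed limits at `±∞`. -/
def limSet (h : ℝ) : Set ℝ :=
  {y | ∃ n : ℤ, y = 2*Real.pi*n + alphaParam h ∨ y = 2*Real.pi*n - alphaParam h}

/-- The total energy `E_h(φ)`, valued in `[0, ∞]`:
exchange + anisotropy energy plus the stray-field (homogeneous `H^{1/2}`) energy. -/
def energy (h : ℝ) (φ : ℝ → ℝ) : ℝ≥0∞ :=
  ENNReal.ofReal (1/2) *
      (∫⁻ x : ℝ, ENNReal.ofReal ((deriv φ x)^2 + 2 * Wpot h (φ x))) +
    ENNReal.ofReal (1/(4*Real.pi)) *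
      (∫⁻ s : ℝ, ∫⁻ t : ℝ,
        ENNReal.ofReal ((Real.cos (φ s) - Real.cos (φ t))^2 / (s - t)^2))

/-- An admissible phase: `C¹`, limits at `±∞` in `2πℤ + {−α, α}`, finite energy. -/
def Admissible (h : ℝ) (φ : ℝ → ℝ) : Prop :=
  ContDiff ℝ 1 φ ∧
    (∃ L ∈ limSet h, Tendsto φ atTop (𝓝 L)) ∧
    (∃ L ∈ limSet h, Tendsto φ atBot (𝓝 L)) ∧
    energy h φ < ⊤

/-- The winding number `deg(φ) = (φ(+∞) − φ(−∞))/(2π)`. -/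
def deg (φ : ℝ → ℝ) : ℝ :=
  (limUnder atTop φ - limUnder atBot φ) / (2*Real.pi)

/-- `𝒜_h(d)`: admissible phases of winding number `d`. -/
def AA (h d : ℝ) : Set (ℝ → ℝ) := {φ | Admissible h φ ∧ deg φ = d}

/-- `ℰ_h(d) = inf {E_h(φ) : φ ∈ 𝒜_h(d)}`. -/
def Einf (h d : ℝ) : ℝ≥0∞ := ⨅ φ ∈ AA h d, energy h φ

/-- `D_α = {n + j·α/π : n ∈ ℤ, j ∈ {−1, 0, 1}}`. -/
def Dset (h : ℝ) : Set ℝ :=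
  {d | ∃ n j : ℤ, (j = -1 ∨ j = 0 ∨ j = 1) ∧ d = n + j * alphaParam h / Real.pi}


/-! ### Collapsing the wells -/

/-- Continuous cut-off, equal to `0` on `(-∞, 1]` and to `1` on `[2, ∞)`. -/
def cutoff (x : ℝ) : ℝ := max 0 (min 1 (x - 1))

lemma cutoff_nonneg (x : ℝ) : 0 ≤ cutoff x := le_max_left _ _

lemma cutoff_le_one (x : ℝ) : cutoff x ≤ 1 := max_le zero_le_one (min_le_left _ _)

lemma cutoff_eq_zero {x : ℝ} (hx : x ≤ 1) : cutoff x = 0 :=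
  max_eq_left ((min_le_right _ _).trans (by linarith))

lemma cutoff_eq_one {x : ℝ} (hx : 2 ≤ x) : cutoff x = 1 := by
  unfold cutoff
  rw [min_eq_left (by linarith), max_eq_right zero_le_one]

lemma continuous_cutoff : Continuous cutoff := by unfold cutoff; fun_prop

/-- A cut-off of a weight `w` positive on `(u, v)` has integral close to `v - u` over `[u, v]` once
the threshold `δ` is small, so a factor `a ≤ M` is enough to make it exactly `v - u`. -/
lemma exists_normalisation {u v : ℝ} (huv : u ≤ v) {w : ℝ → ℝ} (hw : Continuous w)
    (hpos : ∀ t, u < t → t < v → 0 < w t) {M : ℝ} (hM : 1 < M) :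
    ∀ᶠ δ in 𝓝[>] (0 : ℝ), ∃ a, 0 ≤ a ∧ a ≤ M ∧
      a * ∫ t in u..v, cutoff (w t / δ) = v - u := by
  rcases huv.eq_or_lt with rfl | huv'
  · exact Eventually.of_forall fun δ => ⟨0, le_rfl, by linarith, by simp⟩
  -- the cut-offs converge to `1` almost everywhere, so their integrals converge to `v - u`
  have hlim : Tendsto (fun δ => ∫ t in u..v, cutoff (w t / δ)) (𝓝[>] (0 : ℝ))
      (𝓝 (∫ _ in u..v, (1 : ℝ))) := by
    apply intervalIntegral.tendsto_integral_filter_of_dominated_convergence (fun _ => 1)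
    · exact Eventually.of_forall fun δ =>
        (continuous_cutoff.comp (hw.div_const δ)).aestronglyMeasurable
    · refine Eventually.of_forall fun δ => Eventually.of_forall fun t _ => ?_
      rw [Real.norm_eq_abs, abs_of_nonneg (cutoff_nonneg _)]
      exact cutoff_le_one _
    · exact intervalIntegrable_const
    · have hne : ∀ᵐ t : ℝ, t ≠ v := by simp [ae_iff]
      filter_upwards [hne] with t htv ht
      rw [Set.uIoc_of_le huv] at ht
      have hwt := hpos t ht.1 (lt_of_le_of_ne ht.2 htv)
      refine tendsto_const_nhds.congr' ?_
      have : ∀ᶠ δ in 𝓝[>] (0 : ℝ), δ < w t / 2 :=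
        nhdsWithin_le_nhds (eventually_lt_nhds (by positivity))
      filter_upwards [this, self_mem_nhdsWithin] with δ hδ hδ0
      have hδ0' : 0 < δ := hδ0
      rw [cutoff_eq_one]
      rw [le_div_iff₀ hδ0']; linarith
  have h1 : (v - u) / M < ∫ _ in u..v, (1 : ℝ) := by
    rw [intervalIntegral.integral_const, smul_eq_mul, mul_one]
    exact div_lt_self (by linarith) hM
  filter_upwards [hlim.eventually (eventually_gt_nhds h1)] with δ hδ
  have hJ : 0 < ∫ t in u..v, cutoff (w t / δ) :=
    lt_of_le_of_lt (by have : 0 < M := by linarith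
                       have : 0 < v - u := by linarith
                       positivity) hδ
  refine ⟨(v - u) / ∫ t in u..v, cutoff (w t / δ), div_nonneg (by linarith) hJ.le, ?_,
    div_mul_cancel₀ _ hJ.ne'⟩
  rw [div_le_iff₀ hJ]
  rw [div_lt_iff₀ (by linarith)] at hδ
  linarith

lemma kparam_bounds {h : ℝ} (h0 : 0 ≤ h) : 0 ≤ kparam h ∧ kparam h ≤ 1 :=
  ⟨le_min h0 zero_le_one, min_le_right _ _⟩

lemma cos_alpha {h : ℝ} (h0 : 0 ≤ h) : cos (alphaParam h) = kparam h :=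
  Real.cos_arccos (by linarith [(kparam_bounds h0).1]) (kparam_bounds h0).2

lemma alpha_nonneg (h : ℝ) : 0 ≤ alphaParam h := Real.arccos_nonneg _

lemma alpha_le {h : ℝ} (h0 : 0 ≤ h) : alphaParam h ≤ π / 2 :=
  Real.arccos_le_pi_div_two.2 (kparam_bounds h0).1

/-- A `C¹` map of phases that collapses a neighbourhood of each well `2πn ± α` to that well while
its slope stays in `[0, M]`. It respects the symmetries `θ ↦ -θ` and `θ ↦ θ + 2πn`, and `flat`
states the collapsing: the slope vanishes where `cos` is close to `k`. -/
structure Collapse (h M : ℝ) (G : ℝ → ℝ) : Prop where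
  contDiff : ContDiff ℝ 1 G
  deriv_nonneg : ∀ x, 0 ≤ deriv G x
  deriv_le : ∀ x, deriv G x ≤ M
  odd : ∀ x, G (-x) = -G x
  add_int : ∀ x (n : ℤ), G (x + 2 * π * n) = G x + 2 * π * n
  alpha : G (alphaParam h) = alphaParam h
  pi : G π = π
  flat : ∃ ε > 0, ∀ x, |cos x - kparam h| < ε → deriv G x = 0

/-- `G` is a primitive of a combination of two cut-offs, one living where `cos > k` and one where
`cos < k`; their coefficients are chosen so that `G` fixes `α` and `π`, with a common `δ`. -/
lemma exists_collapse {h : ℝ} (h0 : 0 ≤ h) {M : ℝ} (hM : 1 < M) : ∃ G, Collapse h M G := by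
  set k := kparam h with hk
  set α := alphaParam h with hα
  have hα0 : 0 ≤ α := alpha_nonneg h
  have hαπ : α ≤ π := (alpha_le h0).trans (by linarith [pi_pos])
  have hcα : cos α = k := cos_alpha h0
  have e1 := exists_normalisation hα0 (w := fun t => cos t - k) (by fun_prop)
    (fun t h0t htα => by
      have := cos_lt_cos_of_nonneg_of_le_pi h0t.le hαπ htα
      linarith) hM
  have e2 := exists_normalisation hαπ (w := fun t => k - cos t) (by fun_prop)
    (fun t h0t htα => by
      have := cos_lt_cos_of_nonneg_of_le_pi hα0 htα.le h0t
      linarith) hM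
  obtain ⟨δ, ⟨⟨a, ha0, haM, ha⟩, ⟨b, hb0, hbM, hb⟩⟩, hδ⟩ :=
    ((e1.and e2).and self_mem_nhdsWithin).exists
  have hδ : 0 < δ := hδ
  set g : ℝ → ℝ := fun t => a * cutoff ((cos t - k) / δ) + b * cutoff ((k - cos t) / δ) with hg
  have hgc : Continuous g := by
    have h1 : Continuous fun t => cutoff ((cos t - k) / δ) :=
      continuous_cutoff.comp (by fun_prop)
    have h2 : Continuous fun t => cutoff ((k - cos t) / δ) :=
      continuous_cutoff.comp (by fun_prop)
    fun_prop
  have hz1 : ∀ t, cos t ≤ k → cutoff ((cos t - k) / δ) = 0 := fun t ht =>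
    cutoff_eq_zero ((div_nonpos_of_nonpos_of_nonneg (by linarith) hδ.le).trans zero_le_one)
  have hz2 : ∀ t, k ≤ cos t → cutoff ((k - cos t) / δ) = 0 := fun t ht =>
    cutoff_eq_zero ((div_nonpos_of_nonpos_of_nonneg (by linarith) hδ.le).trans zero_le_one)
  set G : ℝ → ℝ := fun x => ∫ t in (0 : ℝ)..x, g t with hG
  have hd : ∀ x, HasDerivAt G (g x) x := fun x => (hgc.integral_hasStrictDerivAt 0 x).hasDerivAt
  have hdG : deriv G = g := funext fun x => (hd x).deriv
  have hG0 : G 0 = 0 := by simp [hG]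
  have hGα : G α = α := by
    have : G α = ∫ t in (0 : ℝ)..α, a * cutoff ((cos t - k) / δ) := by
      apply intervalIntegral.integral_congr
      intro t ht
      rw [Set.uIcc_of_le hα0] at ht
      have : k ≤ cos t := hcα ▸ cos_le_cos_of_nonneg_of_le_pi ht.1 hαπ ht.2
      simp [hg, hz2 t this]
    rw [this, intervalIntegral.integral_const_mul, ha, sub_zero]
  have hGπ : G π = π := by
    have e : G π = G α + ∫ t in α..π, g t :=
      (intervalIntegral.integral_add_adjacent_intervals (hgc.intervalIntegrable _ _)
        (hgc.intervalIntegrable _ _)).symm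
    have : ∫ t in α..π, g t = ∫ t in α..π, b * cutoff ((k - cos t) / δ) := by
      apply intervalIntegral.integral_congr
      intro t ht
      rw [Set.uIcc_of_le hαπ] at ht
      have : cos t ≤ k := hcα ▸ cos_le_cos_of_nonneg_of_le_pi hα0 ht.2 ht.1
      simp [hg, hz1 t this]
    rw [e, this, intervalIntegral.integral_const_mul, hb, hGα]; ring
  have hodd : ∀ x, G (-x) = -G x := by
    intro x
    have hc := is_const_of_deriv_eq_zero (f := fun x => G (-x) + G x)
      (fun x => (((hd (-x)).comp x (hasDerivAt_neg x)).add (hd x)).differentiableAt)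
      (fun x => by
        have := (((hd (-x)).comp x (hasDerivAt_neg x)).add (hd x)).deriv
        refine this.trans ?_
        simp [hg]) x 0
    simp [hG0] at hc
    linarith
  -- a primitive of a periodic function commutes with the period up to a constant, and the
  -- constant is found by comparing the values at `-π` and `π`
  have hper : Function.Periodic (fun x => G x - x) (2 * π) := by
    have hc : ∀ x y, G (x + 2 * π) - G x = G (y + 2 * π) - G y :=
      is_const_of_deriv_eq_zero (f := fun x => G (x + 2 * π) - G x)
      (fun x => (((hd (x + 2 * π)).comp_add_const x (2 * π)).sub (hd x)).differentiableAt)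
      (fun x => by
        refine (((hd (x + 2 * π)).comp_add_const x (2 * π)).sub (hd x)).deriv.trans ?_
        simp [hg])
    intro x
    have := hc x (-π)
    rw [hodd, hGπ, show -π + 2 * π = π by ring, hGπ] at this
    linarith
  refine ⟨G, ?_, ?_, ?_, hodd, ?_, hGα, hGπ, δ, hδ, ?_⟩
  · exact contDiff_one_iff_deriv.2 ⟨fun x => (hd x).differentiableAt, hdG ▸ hgc⟩
  · intro x
    rw [hdG]
    exact add_nonneg (mul_nonneg ha0 (cutoff_nonneg _)) (mul_nonneg hb0 (cutoff_nonneg _))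
  · intro x
    rw [hdG]
    rcases le_total (cos x) k with hx | hx
    · simp only [hg, hz1 x hx]
      nlinarith [cutoff_le_one ((k - cos x) / δ)]
    · simp only [hg, hz2 x hx]
      nlinarith [cutoff_le_one ((cos x - k) / δ)]
  · intro x n
    have := hper.int_mul n x
    rw [show x + 2 * π * n = x + n * (2 * π) by ring]
    linarith
  · intro x hx
    rw [abs_lt] at hx
    rw [hdG]
    simp only [hg]
    rw [cutoff_eq_zero ((div_le_one hδ).2 (by linarith)),
      cutoff_eq_zero ((div_le_one hδ).2 (by linarith))]
    ring

/-- Concavity of the sine on `[0, π]`: it gives `sin y / M ≤ sin (y / M)`, and on the interval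
`[y / M, y]`, which contains `x`, the sine is at least the smaller of its two end values. -/
lemma sin_le_mul_sin {x y M : ℝ} (hM : 1 ≤ M) (hx0 : 0 ≤ x) (hxπ : x ≤ π) (hxy : x ≤ y)
    (hyπ : y ≤ π) (hyM : y ≤ M * x) : sin y ≤ M * sin x := by
  have hM0 : 0 < M := by linarith
  have hy0 : 0 ≤ y := hx0.trans hxy
  have hsy : 0 ≤ sin y := sin_nonneg_of_nonneg_of_le_pi hy0 hyπ
  have hconc := strictConcaveOn_sin_Icc.concaveOn
  have hyM' : y / M ≤ x := by rw [div_le_iff₀ hM0]; linarith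
  have hyM0 : 0 ≤ y / M := by positivity
  have h1 : sin y / M ≤ sin (y / M) := by
    have hc := hconc.2
    have h1M : 1 / M ≤ 1 := (div_le_one hM0).2 hM
    have := hc (⟨le_rfl, pi_pos.le⟩ : (0 : ℝ) ∈ Set.Icc 0 π) (⟨hy0, hyπ⟩ : y ∈ Set.Icc 0 π)
      (sub_nonneg.2 h1M) (by positivity : (0 : ℝ) ≤ 1 / M) (by ring)
    simp only [smul_eq_mul, sin_zero, mul_zero, zero_add] at this
    rw [show 1 / M * y = y / M by ring, show 1 / M * sin y = sin y / M by ring] at this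
    exact this
  have h2 : min (sin (y / M)) (sin y) ≤ sin x :=
    hconc.min_le_of_mem_Icc ⟨hyM0, hyM'.trans hxπ⟩ ⟨hy0, hyπ⟩ ⟨hyM', hxy⟩
  have h3 : sin y / M ≤ sin y := div_le_self hsy hM
  have : sin y / M ≤ sin x := (le_min h1 h3).trans h2
  rw [div_le_iff₀ hM0] at this; linarith

namespace Collapse

variable {h M : ℝ} {G : ℝ → ℝ}

lemma diff (hG : Collapse h M G) : Differentiable ℝ G := hG.contDiff.differentiable (by norm_num)

lemma zero (hG : Collapse h M G) : G 0 = 0 := by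
  have := hG.odd 0
  rw [neg_zero] at this; linarith

lemma mono (hG : Collapse h M G) : Monotone G := monotone_of_deriv_nonneg hG.diff hG.deriv_nonneg

lemma sub_le (hG : Collapse h M G) {x y : ℝ} (hxy : x ≤ y) : G y - G x ≤ M * (y - x) := by
  have : Monotone fun x => M * x - G x := by
    apply monotone_of_deriv_nonneg
    · exact (differentiable_id.const_mul M).sub hG.diff
    · intro x
      have := (((hasDerivAt_id x).const_mul M).sub (hG.diff x).hasDerivAt).deriv
      refine le_of_le_of_eq ?_ this.symm
      linarith [hG.deriv_le x]
  have := this hxy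
  linarith

/-- If `x ≤ G x`, this is `sin_le_mul_sin` for the bound `G x ≤ M x`; otherwise it is the same lemma
after the change of variables `x ↦ π - x`. -/
lemma sin_le (hG : Collapse h M G) (hM : 1 ≤ M) {x : ℝ} (hx0 : 0 ≤ x) (hxπ : x ≤ π) :
    0 ≤ sin (G x) ∧ sin (G x) ≤ M * sin x := by
  have h1 : 0 ≤ G x := hG.zero ▸ hG.mono hx0
  have h2 : G x ≤ π := hG.pi ▸ hG.mono hxπ
  refine ⟨sin_nonneg_of_nonneg_of_le_pi h1 h2, ?_⟩
  rcases le_total x (G x) with hx | hx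
  · refine sin_le_mul_sin hM hx0 hxπ hx h2 ?_
    have := hG.sub_le hx0
    rw [hG.zero] at this; linarith
  · rw [← sin_pi_sub, ← sin_pi_sub x]
    refine sin_le_mul_sin hM (by linarith) (by linarith) (by linarith) (by linarith) ?_
    have := hG.sub_le hxπ
    rw [hG.pi] at this; linarith

/-- By the symmetries of `G`, `cos (G x)` depends on `cos x` only, so `x` may be moved to
`[0, π]`. -/
lemma cos_arccos (hG : Collapse h M G) (x : ℝ) : cos (G x) = cos (G (arccos (cos x))) := by
  have : cos x = cos (arccos (cos x)) :=
    (Real.cos_arccos (neg_one_le_cos x) (cos_le_one x)).symm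
  obtain ⟨n, hn | hn⟩ := cos_eq_cos_iff.1 this
  · rw [hn, show 2 * (n : ℝ) * π + x = x + 2 * π * n by ring, hG.add_int,
      show G x + 2 * π * n = G x + n * (2 * π) by ring, cos_add_int_mul_two_pi]
  · rw [hn, show 2 * (n : ℝ) * π - x = -x + 2 * π * n by ring, hG.add_int, hG.odd,
      show -G x + 2 * π * n = -G x + n * (2 * π) by ring, cos_add_int_mul_two_pi, cos_neg]

/-- On `[0, π]` the function `M² cos - cos ∘ G` is decreasing, because
`sin (G x) G' x ≤ M² sin x`; the general case reduces to this one by `cos_arccos`. -/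
lemma abs_cos_sub_le (hG : Collapse h M G) (hM : 1 ≤ M) (x y : ℝ) :
    |cos (G x) - cos (G y)| ≤ M ^ 2 * |cos x - cos y| := by
  have anti : AntitoneOn (fun x => M ^ 2 * cos x - cos (G x)) (Set.Icc 0 π) := by
    apply antitoneOn_of_deriv_nonpos (convex_Icc _ _)
    · exact ((continuous_cos.const_mul _).sub
        (continuous_cos.comp hG.contDiff.continuous)).continuousOn
    · exact ((differentiable_cos.const_mul _).sub
        (differentiable_cos.comp hG.diff)).differentiableOn
    · intro x hx
      rw [interior_Icc] at hx
      have := (((hasDerivAt_cos x).const_mul (M ^ 2)).sub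
        ((hasDerivAt_cos (G x)).comp x (hG.diff x).hasDerivAt)).deriv
      refine le_of_eq_of_le this ?_
      obtain ⟨h1, h2⟩ := hG.sin_le hM hx.1.le hx.2.le
      have h3 := mul_le_mul h2 (hG.deriv_le x) (hG.deriv_nonneg x) (h1.trans h2)
      nlinarith
  have key : ∀ u v, 0 ≤ u → u ≤ v → v ≤ π →
      |cos (G u) - cos (G v)| ≤ M ^ 2 * |cos u - cos v| := by
    intro u v hu huv hv
    have h1 := anti ⟨hu, huv.trans hv⟩ ⟨hu.trans huv, hv⟩ huv
    simp only at h1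
    have h2 : cos v ≤ cos u := cos_le_cos_of_nonneg_of_le_pi hu hv huv
    have h3 : cos (G v) ≤ cos (G u) := cos_le_cos_of_nonneg_of_le_pi
      (hG.zero ▸ hG.mono hu) (hG.pi ▸ hG.mono hv) (hG.mono huv)
    rw [abs_of_nonneg (by linarith), abs_of_nonneg (by linarith)]
    linarith
  rw [hG.cos_arccos x, hG.cos_arccos y]
  have ex := Real.cos_arccos (neg_one_le_cos x) (cos_le_one x)
  have ey := Real.cos_arccos (neg_one_le_cos y) (cos_le_one y)
  rw [← congrArg₂ (fun a b => M ^ 2 * |a - b|) ex ey]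
  rcases le_total (arccos (cos x)) (arccos (cos y)) with hxy | hxy
  · exact key _ _ (arccos_nonneg _) hxy (arccos_le_pi _)
  · rw [abs_sub_comm, abs_sub_comm (cos (arccos (cos x)))]
    exact key _ _ (arccos_nonneg _) hxy (arccos_le_pi _)

end Collapse

/-! ### The potential -/

lemma two_Wpot (h θ : ℝ) : 2 * Wpot h θ =
    (cos θ - kparam h) ^ 2 + 2 * ((kparam h - h) * (cos θ - kparam h)) := by
  unfold Wpot; ring

/-- The linear term of the potential is nonnegative: it vanishes for `h ≤ 1`, and for `h ≥ 1` both
factors are nonpositive since `k = 1`. -/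
lemma kparam_sub_mul (h θ : ℝ) :
    (kparam h - h) * (cos θ - kparam h) = |kparam h - h| * |cos θ - kparam h| := by
  rcases le_total h 1 with hh | hh
  · simp [kparam, min_eq_left hh]
  · simp only [kparam, min_eq_right hh]
    rw [abs_of_nonpos (by linarith), abs_of_nonpos (by linarith [cos_le_one θ])]; ring

lemma Wpot_nonneg (h θ : ℝ) : 0 ≤ Wpot h θ := by
  have := two_Wpot h θ
  rw [kparam_sub_mul] at this
  have : 0 ≤ 2 * Wpot h θ := by rw [this]; positivity
  linarith

lemma cos_of_mem {h : ℝ} (h0 : 0 ≤ h) {L : ℝ} (hL : L ∈ limSet h) : cos L = kparam h := by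
  obtain ⟨n, rfl | rfl⟩ := hL
  · rw [show 2 * π * n + alphaParam h = alphaParam h + n * (2 * π) by ring,
      cos_add_int_mul_two_pi, cos_alpha h0]
  · rw [show 2 * π * n - alphaParam h = -alphaParam h + n * (2 * π) by ring,
      cos_add_int_mul_two_pi, cos_neg, cos_alpha h0]

lemma Wpot_of_cos {h : ℝ} {L : ℝ} (hL : cos L = kparam h) : Wpot h L = 0 := by
  have := two_Wpot h L
  rw [hL] at this; simp at this; exact this

namespace Collapse

variable {h M : ℝ} {G : ℝ → ℝ}

lemma Wpot_le (hG : Collapse h M G) (h0 : 0 ≤ h) (hM : 1 ≤ M) (x : ℝ) :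
    2 * Wpot h (G x) ≤ M ^ 4 * (2 * Wpot h x) := by
  rw [two_Wpot, two_Wpot, kparam_sub_mul, kparam_sub_mul]
  have h1 := hG.abs_cos_sub_le hM x (alphaParam h)
  rw [hG.alpha, cos_alpha h0] at h1
  set A := |cos (G x) - kparam h| with hA
  set B := |cos x - kparam h| with hB
  rw [← sq_abs (cos (G x) - _), ← sq_abs (cos x - _), ← hA, ← hB]
  have hA0 : 0 ≤ A := abs_nonneg _
  have hB0 : 0 ≤ B := abs_nonneg _
  have h2 : A ^ 2 ≤ (M ^ 2 * B) ^ 2 := pow_le_pow_left₀ hA0 h1 2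
  have h3 : A ≤ M ^ 4 * B := h1.trans
    (mul_le_mul_of_nonneg_right (pow_le_pow_right₀ hM (by norm_num)) hB0)
  have h4 := mul_le_mul_of_nonneg_left h3 (abs_nonneg (kparam h - h))
  nlinarith

/-- The exchange energy grows by at most `M²`, the anisotropy and the stray field by at most
`M⁴`. -/
lemma energy_comp_le (hG : Collapse h M G) (h0 : 0 ≤ h) (hM : 1 ≤ M) {φ : ℝ → ℝ}
    (hφ : ContDiff ℝ 1 φ) :
    energy h (G ∘ φ) ≤ ENNReal.ofReal (M ^ 4) * energy h φ := by
  have hM4 : (0 : ℝ) ≤ M ^ 4 := by positivity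
  unfold energy
  rw [mul_add, mul_left_comm, mul_left_comm (ENNReal.ofReal (M ^ 4))]
  refine add_le_add (mul_le_mul_right ?_ _) (mul_le_mul_right ?_ _)
  · rw [← lintegral_const_mul' _ _ ENNReal.ofReal_ne_top]
    refine lintegral_mono fun x => ?_
    rw [← ENNReal.ofReal_mul hM4]
    apply ENNReal.ofReal_le_ofReal
    have hd : deriv (G ∘ φ) x = deriv G (φ x) * deriv φ x :=
      ((hG.diff (φ x)).hasDerivAt.comp x (hφ.differentiable (by norm_num) x).hasDerivAt).deriv
    have h1 : deriv G (φ x) ^ 2 ≤ M ^ 4 :=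
      (pow_le_pow_left₀ (hG.deriv_nonneg _) (hG.deriv_le _) 2).trans
        (pow_le_pow_right₀ hM (by norm_num))
    rw [hd, mul_pow, mul_add]
    exact add_le_add (mul_le_mul_of_nonneg_right h1 (sq_nonneg _)) (hG.Wpot_le h0 hM _)
  · rw [← lintegral_const_mul' _ _ ENNReal.ofReal_ne_top]
    refine lintegral_mono fun s => ?_
    simp only
    rw [← lintegral_const_mul' _ _ ENNReal.ofReal_ne_top]
    refine lintegral_mono fun t => ?_
    simp only
    rw [← ENNReal.ofReal_mul hM4]
    apply ENNReal.ofReal_le_ofReal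
    rw [← mul_div_assoc]
    apply div_le_div_of_nonneg_right _ (sq_nonneg _)
    have := pow_le_pow_left₀ (abs_nonneg _) (hG.abs_cos_sub_le hM (φ s) (φ t)) 2
    rw [mul_pow, sq_abs, sq_abs] at this
    calc _ ≤ _ := this
      _ = _ := by ring

/-- Wells are fixed by `G`, and `G` is constant near them. Phases composed with `G` are therefore
exactly constant near `±∞`. -/
lemma eventually_eq (hG : Collapse h M G) (h0 : 0 ≤ h) {L : ℝ} (hL : L ∈ limSet h) :
    ∀ᶠ x in 𝓝 L, G x = L := by
  obtain ⟨ε, hε, hflat⟩ := hG.flat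
  have hGL : G L = L := by
    obtain ⟨n, rfl | rfl⟩ := hL
    · rw [add_comm, hG.add_int, hG.alpha]
    · rw [sub_eq_add_neg, add_comm, hG.add_int, hG.odd, hG.alpha]
  have hev : ∀ᶠ x in 𝓝 L, |cos x - kparam h| < ε := by
    have : Tendsto (fun x => |cos x - kparam h|) (𝓝 L) (𝓝 |cos L - kparam h|) :=
      Continuous.tendsto (by fun_prop) L
    rw [cos_of_mem h0 hL, sub_self, abs_zero] at this
    exact this.eventually (eventually_lt_nhds hε)
  obtain ⟨r, hr, hball⟩ := Metric.eventually_nhds_iff_ball.1 hev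
  filter_upwards [Metric.ball_mem_nhds L hr] with x hx
  have := (convex_ball L r).is_const_of_fderivWithin_eq_zero (𝕜 := ℝ) (f := G)
    hG.diff.differentiableOn (fun y hy => by
      rw [fderivWithin_of_isOpen Metric.isOpen_ball hy]
      ext
      simpa using hflat y (hball y hy)) hx (Metric.mem_ball_self hr)
  rw [this, hGL]

end Collapse


/-! ### Symmetries of the energy -/

lemma continuous_Wpot (h : ℝ) : Continuous (Wpot h) := by unfold Wpot; fun_prop

lemma energy_shift (h : ℝ) (φ : ℝ → ℝ) (T : ℝ) : energy h (fun x => φ (x - T)) = energy h φ := by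
  unfold energy
  congr 2
  · simp_rw [deriv_comp_sub_const]
    exact lintegral_sub_right_eq_self
      (fun x => ENNReal.ofReal ((deriv φ x) ^ 2 + 2 * Wpot h (φ x))) T
  · rw [← lintegral_sub_right_eq_self (fun s => ∫⁻ t : ℝ,
      ENNReal.ofReal ((cos (φ s) - cos (φ t)) ^ 2 / (s - t) ^ 2)) T]
    refine lintegral_congr fun s => ?_
    rw [← lintegral_sub_right_eq_self (fun t =>
      ENNReal.ofReal ((cos (φ (s - T)) - cos (φ t)) ^ 2 / (s - T - t) ^ 2)) T]
    refine lintegral_congr fun t => ?_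
    rw [sub_sub_sub_cancel_right]

lemma energy_reflect (h : ℝ) (φ : ℝ → ℝ) : energy h (fun x => -φ (-x)) = energy h φ := by
  unfold energy
  congr 2
  · rw [← lintegral_neg_eq_self]
    refine lintegral_congr fun x => ?_
    rw [deriv.fun_neg, deriv_comp_neg]
    simp [Wpot]
  · rw [← lintegral_neg_eq_self]
    refine lintegral_congr fun s => ?_
    rw [← lintegral_neg_eq_self]
    refine lintegral_congr fun t => ?_
    simp only [neg_neg, cos_neg]
    rw [show (-s - -t) ^ 2 = (s - t) ^ 2 by ring]

lemma energy_add_two_pi (h : ℝ) (φ : ℝ → ℝ) (n : ℤ) :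
    energy h (fun x => φ x + n * (2 * π)) = energy h φ := by
  unfold energy
  simp only [deriv_add_const, Wpot, cos_add_int_mul_two_pi]

/-- Without external field the energy is also invariant under the half turn `φ ↦ φ + π`, because
changing the sign of `cos φ` does not affect it. -/
lemma energy_add_pi (φ : ℝ → ℝ) : energy 0 (fun x => φ x + π) = energy 0 φ := by
  unfold energy
  congr 2
  · refine lintegral_congr fun x => ?_
    simp [Wpot]
  · refine lintegral_congr fun s => lintegral_congr fun t => ?_
    simp only [cos_add_pi]
    rw [show (-cos (φ s) - -cos (φ t)) ^ 2 = (cos (φ s) - cos (φ t)) ^ 2 by ring]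

/-! ### Gluing -/

lemma local_glue_le (h : ℝ) {ψ₁ ψ₃ : ℝ → ℝ} {A L T : ℝ} (hT : 2 * A < T)
    (h1p : ∀ x, A ≤ x → ψ₁ x = L) (h3m : ∀ x, x ≤ T - A → ψ₃ x = L)
    (hψ₁ : ContDiff ℝ 1 ψ₁) :
    (∫⁻ x : ℝ, ENNReal.ofReal ((deriv (fun x => ψ₁ x + (ψ₃ x - L)) x) ^ 2 +
      2 * Wpot h (ψ₁ x + (ψ₃ x - L)))) ≤
    (∫⁻ x : ℝ, ENNReal.ofReal ((deriv ψ₁ x) ^ 2 + 2 * Wpot h (ψ₁ x))) +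
    ∫⁻ x : ℝ, ENNReal.ofReal ((deriv ψ₃ x) ^ 2 + 2 * Wpot h (ψ₃ x)) := by
  have hmeas : Measurable fun x => ENNReal.ofReal ((deriv ψ₁ x) ^ 2 + 2 * Wpot h (ψ₁ x)) := by
    have c1 : Continuous (deriv ψ₁) := hψ₁.continuous_deriv le_rfl
    have c2 : Continuous fun x => Wpot h (ψ₁ x) := (continuous_Wpot h).comp hψ₁.continuous
    have : Continuous fun x => (deriv ψ₁ x) ^ 2 + 2 * Wpot h (ψ₁ x) := by fun_prop
    exact this.measurable.ennreal_ofReal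
  rw [← lintegral_add_left hmeas]
  refine lintegral_mono fun x => ?_
  simp only
  rcases lt_or_ge x (T / 2) with hx | hx
  · have hev : (fun x => ψ₁ x + (ψ₃ x - L)) =ᶠ[𝓝 x] ψ₁ := by
      filter_upwards [eventually_lt_nhds (show x < T - A by linarith)] with y hy
      rw [h3m y hy.le]; ring
    rw [hev.deriv_eq, h3m x (by linarith), sub_self, add_zero]
    exact le_self_add
  · have hev : (fun x => ψ₁ x + (ψ₃ x - L)) =ᶠ[𝓝 x] ψ₃ := by
      filter_upwards [eventually_gt_nhds (show A < x by linarith)] with y hy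
      rw [h1p y hy.le]; ring
    rw [hev.deriv_eq, h1p x (by linarith), show L + (ψ₃ x - L) = ψ₃ x by ring]
    exact le_add_self

/-- With `a = cos ψ₁ - k` and `b = cos ψ₃ - k`, supported in `(-A, A)` and `(T - A, T + A)`, the glued
cosine is `k + a + b`. Expanding the square leaves the cross term
`-2 (a s * b t + a t * b s) / (s - t)²`, which is bounded by `8 / (T - 2A)²` since `|a|, |b| ≤ 2`. -/
lemma interaction_le {h : ℝ} (h0 : 0 ≤ h) {ψ₁ ψ₃ : ℝ → ℝ} {A L T : ℝ} (hT : 2 * A < T)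
    (hL : cos L = kparam h)
    (h1p : ∀ x, A ≤ x → ψ₁ x = L) (h1m : ∀ x, x ≤ -A → cos (ψ₁ x) = kparam h)
    (h3m : ∀ x, x ≤ T - A → ψ₃ x = L) (h3p : ∀ x, T + A ≤ x → cos (ψ₃ x) = kparam h) (s t : ℝ) :
    ENNReal.ofReal
      ((cos (ψ₁ s + (ψ₃ s - L)) - cos (ψ₁ t + (ψ₃ t - L))) ^ 2 / (s - t) ^ 2) ≤
    ENNReal.ofReal ((cos (ψ₁ s) - cos (ψ₁ t)) ^ 2 / (s - t) ^ 2) +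
    ENNReal.ofReal ((cos (ψ₃ s) - cos (ψ₃ t)) ^ 2 / (s - t) ^ 2) +
    (ENNReal.ofReal (8 / (T - 2 * A) ^ 2) * (Set.Ioo (-A) A).indicator 1 s *
        (Set.Ioo (T - A) (T + A)).indicator 1 t +
      ENNReal.ofReal (8 / (T - 2 * A) ^ 2) * (Set.Ioo (T - A) (T + A)).indicator 1 s *
        (Set.Ioo (-A) A).indicator 1 t) := by
  obtain ⟨hk0, hk1⟩ := kparam_bounds h0
  set k := kparam h with hk
  set I : Set ℝ := Set.Ioo (-A) A with hI
  set J : Set ℝ := Set.Ioo (T - A) (T + A) with hJ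
  set K := ENNReal.ofReal (8 / (T - 2 * A) ^ 2) with hK
  set p : ℝ → ℝ≥0∞ := I.indicator 1 with hp
  set q : ℝ → ℝ≥0∞ := J.indicator 1 with hq
  set a : ℝ → ℝ := fun x => cos (ψ₁ x) - k with ha
  set b : ℝ → ℝ := fun x => cos (ψ₃ x) - k with hb
  have haI : ∀ x, x ∉ I → a x = 0 := by
    intro x hx
    rcases le_or_gt x (-A) with h' | h'
    · simp [ha, h1m x h']
    · have : A ≤ x := by by_contra hc; exact hx ⟨h', not_le.1 hc⟩
      simp [ha, h1p x this, hL]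
  have hbJ : ∀ x, x ∉ J → b x = 0 := by
    intro x hx
    rcases le_or_gt x (T - A) with h' | h'
    · simp [hb, h3m x h', hL]
    · have : T + A ≤ x := by by_contra hc; exact hx ⟨h', not_le.1 hc⟩
      simp [hb, h3p x this]
  have hab : ∀ x, cos (ψ₁ x + (ψ₃ x - L)) = k + a x + b x := by
    intro x
    rcases lt_or_ge x (T / 2) with hx | hx
    · rw [hb]; simp only
      rw [h3m x (by linarith), sub_self, add_zero, hL]; simp [ha]
    · rw [ha]; simp only
      rw [h1p x (by linarith), show L + (ψ₃ x - L) = ψ₃ x by ring, hL]; simp [hb]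
  have ha2 : ∀ x, |a x| ≤ 2 := fun x => by
    rw [abs_le]; simp only [ha]
    constructor <;> linarith [neg_one_le_cos (ψ₁ x), cos_le_one (ψ₁ x)]
  have hb2 : ∀ x, |b x| ≤ 2 := fun x => by
    rw [abs_le]; simp only [hb]
    constructor <;> linarith [neg_one_le_cos (ψ₃ x), cos_le_one (ψ₃ x)]
  have habm : ∀ x y, -2 * (a x * b y) ≤ 8 := by
    intro x y
    have h' : |a x * b y| ≤ 2 * 2 := by
      rw [abs_mul]; exact mul_le_mul (ha2 x) (hb2 y) (abs_nonneg _) (by norm_num)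
    have := (abs_le.1 h').1
    linarith
  have e1 : cos (ψ₁ s) - cos (ψ₁ t) = a s - a t := by simp [ha]
  have e3 : cos (ψ₃ s) - cos (ψ₃ t) = b s - b t := by simp [hb]
  have eΨ : (k + a s + b s - (k + a t + b t)) ^ 2 / (s - t) ^ 2 =
      (a s - a t) ^ 2 / (s - t) ^ 2 + (b s - b t) ^ 2 / (s - t) ^ 2 +
      (2 * (a s * b s) + 2 * (a t * b t) - 2 * (a s * b t) - 2 * (a t * b s)) /
        (s - t) ^ 2 := by ring
  have hIJ : ∀ x, x ∈ I → x ∉ J := fun x hx hx' => by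
    have h1 := hx.2
    have h2 := hx'.1
    linarith
  have hself : ∀ x, a x * b x = 0 := fun x => by
    by_cases hx : x ∈ I
    · rw [hbJ x (hIJ x hx), mul_zero]
    · rw [haI x hx, zero_mul]
  have n1 : 0 ≤ (a s - a t) ^ 2 / (s - t) ^ 2 := by positivity
  have n3 : 0 ≤ (b s - b t) ^ 2 / (s - t) ^ 2 := by positivity
  have hTA : 0 < (T - 2 * A) ^ 2 := pow_pos (by linarith) 2
  have n8 : 0 ≤ 8 / (T - 2 * A) ^ 2 := by positivity
  rw [hab, hab, e1, e3, eΨ, hself, hself, mul_zero, add_zero, zero_sub]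
  -- the interaction term is only nonzero when one of `s`, `t` lies in `I` and the other in `J`
  by_cases hst : s ∈ I ∧ t ∈ J
  · have hp1 : p s = 1 := Set.indicator_of_mem hst.1 _
    have hq1 : q t = 1 := Set.indicator_of_mem hst.2 _
    have hr : (-(2 * (a s * b t)) - 2 * (a t * b s)) / (s - t) ^ 2 ≤ 8 / (T - 2 * A) ^ 2 := by
      have hd : (T - 2 * A) ^ 2 ≤ (s - t) ^ 2 := by
        have h1 := hst.1.2
        have h2 := hst.2.1
        nlinarith
      refine div_le_div₀ (by norm_num) ?_ hTA hd
      rw [hbJ s (hIJ s hst.1)]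
      linarith [habm s t]
    calc _ ≤ ENNReal.ofReal ((a s - a t) ^ 2 / (s - t) ^ 2 + (b s - b t) ^ 2 / (s - t) ^ 2 +
          8 / (T - 2 * A) ^ 2) := ENNReal.ofReal_le_ofReal (by linarith)
      _ = _ := by rw [ENNReal.ofReal_add (by positivity) n8, ENNReal.ofReal_add n1 n3]
      _ ≤ _ := by
        gcongr
        rw [hp1, hq1, mul_one, mul_one]
        exact le_self_add
  by_cases hts : s ∈ J ∧ t ∈ I
  · have hp1 : p t = 1 := Set.indicator_of_mem hts.2 _
    have hq1 : q s = 1 := Set.indicator_of_mem hts.1 _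
    have hr : (-(2 * (a s * b t)) - 2 * (a t * b s)) / (s - t) ^ 2 ≤ 8 / (T - 2 * A) ^ 2 := by
      have hd : (T - 2 * A) ^ 2 ≤ (s - t) ^ 2 := by
        have h1 := hts.2.2
        have h2 := hts.1.1
        nlinarith
      refine div_le_div₀ (by norm_num) ?_ hTA hd
      rw [hbJ t (hIJ t hts.2)]
      linarith [habm t s]
    calc _ ≤ ENNReal.ofReal ((a s - a t) ^ 2 / (s - t) ^ 2 + (b s - b t) ^ 2 / (s - t) ^ 2 +
          8 / (T - 2 * A) ^ 2) := ENNReal.ofReal_le_ofReal (by linarith)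
      _ = _ := by rw [ENNReal.ofReal_add (by positivity) n8, ENNReal.ofReal_add n1 n3]
      _ ≤ _ := by
        gcongr
        rw [hp1, hq1, mul_one, mul_one]
        exact le_add_self
  have z1 : a s * b t = 0 := by
    by_cases hs : s ∈ I
    · rw [hbJ t fun ht => hst ⟨hs, ht⟩, mul_zero]
    · rw [haI s hs, zero_mul]
  have z2 : a t * b s = 0 := by
    by_cases hs : t ∈ I
    · rw [hbJ s fun ht => hts ⟨ht, hs⟩, mul_zero]
    · rw [haI t hs, zero_mul]
  rw [z1, z2, ← ENNReal.ofReal_add n1 n3]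
  simp

/-- Integration of the pointwise bound of `interaction_le`. -/
lemma lintegral_interaction_le {F : ℝ → ℝ → ℝ≥0∞} {D₁ D₃ : ℝ × ℝ → ℝ≥0∞} {p q : ℝ → ℝ≥0∞}
    (m₁ : Measurable D₁) (mp : Measurable p) (mq : Measurable q) {K : ℝ≥0∞}
    (hF : ∀ s t, F s t ≤ D₁ (s, t) + D₃ (s, t) + (K * p s * q t + K * q s * p t)) :
    (∫⁻ s, ∫⁻ t, F s t) ≤ (∫⁻ s, ∫⁻ t, D₁ (s, t)) + (∫⁻ s, ∫⁻ t, D₃ (s, t)) +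
      K * (2 * ((∫⁻ s, p s) * ∫⁻ t, q t)) := by
  calc _ ≤ ∫⁻ s, ∫⁻ t, (D₁ (s, t) + D₃ (s, t) + (K * p s * q t + K * q s * p t)) :=
        lintegral_mono fun s => lintegral_mono fun t => hF s t
    _ = ∫⁻ s, ((∫⁻ t, D₁ (s, t)) + (∫⁻ t, D₃ (s, t)) +
        (K * p s * (∫⁻ t, q t) + K * q s * ∫⁻ t, p t)) := by
        refine lintegral_congr fun s => ?_
        have mI : Measurable fun t => K * p s * q t + K * q s * p t :=
          (mq.const_mul _).add (mp.const_mul _)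
        have ms : Measurable fun t => D₁ (s, t) := m₁.comp measurable_prodMk_left
        rw [lintegral_add_right _ mI, lintegral_add_left ms,
          lintegral_add_right _ (mp.const_mul _), lintegral_const_mul _ mq,
          lintegral_const_mul _ mp]
    _ = _ := by
        have mI : Measurable fun s => K * p s * (∫⁻ t, q t) + K * q s * ∫⁻ t, p t :=
          ((mp.const_mul _).mul_const _).add ((mq.const_mul _).mul_const _)
        rw [lintegral_add_right _ mI, lintegral_add_left m₁.lintegral_prod_right',
          lintegral_add_right _ ((mq.const_mul _).mul_const _),
          lintegral_mul_const _ (mp.const_mul _), lintegral_mul_const _ (mq.const_mul _),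
          lintegral_const_mul _ mq, lintegral_const_mul _ mp]
        ring

lemma stray_glue_le {h : ℝ} (h0 : 0 ≤ h) {ψ₁ ψ₃ : ℝ → ℝ} {A L T : ℝ} (hT : 2 * A < T)
    (hL : cos L = kparam h)
    (h1p : ∀ x, A ≤ x → ψ₁ x = L) (h1m : ∀ x, x ≤ -A → cos (ψ₁ x) = kparam h)
    (h3m : ∀ x, x ≤ T - A → ψ₃ x = L) (h3p : ∀ x, T + A ≤ x → cos (ψ₃ x) = kparam h)
    (hψ₁ : Continuous ψ₁) :
    (∫⁻ s : ℝ, ∫⁻ t : ℝ, ENNReal.ofReal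
      ((cos (ψ₁ s + (ψ₃ s - L)) - cos (ψ₁ t + (ψ₃ t - L))) ^ 2 / (s - t) ^ 2)) ≤
    (∫⁻ s : ℝ, ∫⁻ t : ℝ, ENNReal.ofReal ((cos (ψ₁ s) - cos (ψ₁ t)) ^ 2 / (s - t) ^ 2)) +
    (∫⁻ s : ℝ, ∫⁻ t : ℝ, ENNReal.ofReal ((cos (ψ₃ s) - cos (ψ₃ t)) ^ 2 / (s - t) ^ 2)) +
    ENNReal.ofReal (8 / (T - 2 * A) ^ 2) *
      (2 * (ENNReal.ofReal (2 * A) * ENNReal.ofReal (2 * A))) := by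
  have mD : Measurable fun z : ℝ × ℝ =>
      ENNReal.ofReal ((cos (ψ₁ z.1) - cos (ψ₁ z.2)) ^ 2 / (z.1 - z.2) ^ 2) := by
    have c1 : Continuous fun z : ℝ × ℝ => (cos (ψ₁ z.1) - cos (ψ₁ z.2)) ^ 2 := by fun_prop
    have c2 : Continuous fun z : ℝ × ℝ => (z.1 - z.2) ^ 2 := by fun_prop
    exact (c1.measurable.div c2.measurable).ennreal_ofReal
  have key := lintegral_interaction_le
    (D₃ := fun z => ENNReal.ofReal ((cos (ψ₃ z.1) - cos (ψ₃ z.2)) ^ 2 / (z.1 - z.2) ^ 2)) mD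
    (measurable_one.indicator measurableSet_Ioo) (measurable_one.indicator measurableSet_Ioo)
    (interaction_le h0 hT hL h1p h1m h3m h3p)
  rw [lintegral_indicator_one measurableSet_Ioo, lintegral_indicator_one measurableSet_Ioo,
    Real.volume_Ioo, Real.volume_Ioo, show A - -A = 2 * A by ring,
    show T + A - (T - A) = 2 * A by ring] at key
  exact key

/-- Two phases that are at rest outside `[-A, A]` and fit together at the value `L` are glued at
distance `T`; the interaction energy of the two pieces is at most of order `1 / (T - 2A)²`. -/
lemma energy_glue_le {h : ℝ} (h0 : 0 ≤ h) {ψ₁ ψ₂ : ℝ → ℝ} (hψ₁ : ContDiff ℝ 1 ψ₁)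
    {A L T : ℝ} (hT : 2 * A < T) (hL : cos L = kparam h)
    (h1p : ∀ x, A ≤ x → ψ₁ x = L) (h1m : ∀ x, x ≤ -A → cos (ψ₁ x) = kparam h)
    (h2m : ∀ x, x ≤ -A → ψ₂ x = L) (h2p : ∀ x, A ≤ x → cos (ψ₂ x) = kparam h) :
    energy h (fun x => ψ₁ x + (ψ₂ (x - T) - L)) ≤ energy h ψ₁ + energy h ψ₂ +
      ENNReal.ofReal (1 / (4 * π)) * (ENNReal.ofReal (8 / (T - 2 * A) ^ 2) *
        (2 * (ENNReal.ofReal (2 * A) * ENNReal.ofReal (2 * A)))) := by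
  rw [← energy_shift h ψ₂ T]
  set ψ₃ : ℝ → ℝ := fun x => ψ₂ (x - T)
  have h3m : ∀ x, x ≤ T - A → ψ₃ x = L := fun x hx => h2m _ (by linarith)
  have h3p : ∀ x, T + A ≤ x → cos (ψ₃ x) = kparam h := fun x hx => h2p _ (by linarith)
  have hloc := local_glue_le h hT h1p h3m hψ₁
  have hnl := stray_glue_le h0 hT hL h1p h1m h3m h3p hψ₁.continuous
  calc energy h (fun x => ψ₁ x + (ψ₃ x - L)) ≤ _ :=
        add_le_add (mul_le_mul_right hloc _) (mul_le_mul_right hnl _)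
    _ = _ := by unfold energy; ring

/-! ### Phases with matching end values -/

/-- A finite-energy `C¹` phase running from the value `a` at `-∞` to the value `b` at `+∞`. -/
structure Phase (h : ℝ) (φ : ℝ → ℝ) (a b : ℝ) : Prop where
  contDiff : ContDiff ℝ 1 φ
  bot : Tendsto φ atBot (𝓝 a)
  top : Tendsto φ atTop (𝓝 b)
  finite : energy h φ < ⊤

namespace Phase

variable {h a b : ℝ} {φ : ℝ → ℝ}

lemma deg_eq (P : Phase h φ a b) : deg φ = (b - a) / (2 * π) := by
  rw [deg, P.top.limUnder_eq, P.bot.limUnder_eq]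

lemma mem_AA (P : Phase h φ a b) (ha : a ∈ limSet h) (hb : b ∈ limSet h) :
    φ ∈ AA h ((b - a) / (2 * π)) :=
  ⟨⟨P.contDiff, ⟨b, hb, P.top⟩, ⟨a, ha, P.bot⟩, P.finite⟩, P.deg_eq⟩

lemma reflect (P : Phase h φ a b) : Phase h (fun x => -φ (-x)) (-b) (-a) where
  contDiff := (P.contDiff.comp contDiff_neg).neg
  bot := (P.top.comp tendsto_neg_atBot_atTop).neg
  top := (P.bot.comp tendsto_neg_atTop_atBot).neg
  finite := by rw [energy_reflect]; exact P.finite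

lemma add_two_pi (P : Phase h φ a b) (n : ℤ) :
    Phase h (fun x => φ x + n * (2 * π)) (a + n * (2 * π)) (b + n * (2 * π)) where
  contDiff := P.contDiff.add contDiff_const
  bot := P.bot.add_const _
  top := P.top.add_const _
  finite := by rw [energy_add_two_pi]; exact P.finite

lemma add_pi (P : Phase 0 φ a b) : Phase 0 (fun x => φ x + π) (a + π) (b + π) where
  contDiff := P.contDiff.add contDiff_const
  bot := P.bot.add_const _
  top := P.top.add_const _
  finite := by rw [energy_add_pi]; exact P.finite

end Phase

/-- For a fixed collapse slope `M`, the collapsed phases can be glued at any large distance `T`. -/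
lemma Einf_le_of_collapse {h : ℝ} (h0 : 0 ≤ h) {φ₁ φ₂ : ℝ → ℝ} {a b c : ℝ}
    (P₁ : Phase h φ₁ a b) (P₂ : Phase h φ₂ b c) (ha : a ∈ limSet h) (hb : b ∈ limSet h)
    (hc : c ∈ limSet h) {M : ℝ} (hM : 1 < M) :
    Einf h ((c - a) / (2 * π)) ≤ ENNReal.ofReal (M ^ 4) * (energy h φ₁ + energy h φ₂) := by
  obtain ⟨G, hG⟩ := exists_collapse h0 hM
  have en₁ := hG.energy_comp_le h0 hM.le P₁.contDiff
  have en₂ := hG.energy_comp_le h0 hM.le P₂.contDiff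
  have c₁ : ContDiff ℝ 1 (G ∘ φ₁) := hG.contDiff.comp P₁.contDiff
  have c₂ : ContDiff ℝ 1 (G ∘ φ₂) := hG.contDiff.comp P₂.contDiff
  have ev := ((P₁.top.eventually (hG.eventually_eq h0 hb)).and
    (P₂.top.eventually (hG.eventually_eq h0 hc))).and
    (((P₁.bot.comp tendsto_neg_atTop_atBot).eventually (hG.eventually_eq h0 ha)).and
    ((P₂.bot.comp tendsto_neg_atTop_atBot).eventually (hG.eventually_eq h0 hb)))
  obtain ⟨A, hA⟩ := eventually_atTop.1 ev
  have h1p : ∀ x, A ≤ x → (G ∘ φ₁) x = b := fun x hx => (hA x hx).1.1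
  have h2p : ∀ x, A ≤ x → (G ∘ φ₂) x = c := fun x hx => (hA x hx).1.2
  have h1m : ∀ x, x ≤ -A → (G ∘ φ₁) x = a := fun x hx => by
    have := (hA (-x) (by linarith)).2.1
    simpa using this
  have h2m : ∀ x, x ≤ -A → (G ∘ φ₂) x = b := fun x hx => by
    have := (hA (-x) (by linarith)).2.2
    simpa using this
  set ψ₁ := G ∘ φ₁
  set ψ₂ := G ∘ φ₂
  set r : ℝ → ℝ≥0∞ := fun T => ENNReal.ofReal (1 / (4 * π)) *
    (ENNReal.ofReal (8 / (T - 2 * A) ^ 2) *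
      (2 * (ENNReal.ofReal (2 * A) * ENNReal.ofReal (2 * A)))) with hr
  have hrtop : ∀ T, r T < ⊤ := fun T => by
    simp only [hr]
    exact ENNReal.mul_lt_top ENNReal.ofReal_lt_top (ENNReal.mul_lt_top ENNReal.ofReal_lt_top
      (ENNReal.mul_lt_top (by simp) (ENNReal.mul_lt_top ENNReal.ofReal_lt_top
        ENNReal.ofReal_lt_top)))
  have hr0 : Tendsto r atTop (𝓝 0) := by
    have t1 : Tendsto (fun T : ℝ => 8 / (T - 2 * A) ^ 2) atTop (𝓝 0) :=
      Tendsto.const_div_atTop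
        ((tendsto_pow_atTop two_ne_zero).comp (tendsto_atTop_add_const_right _ _ tendsto_id)) _
    have t2 := ENNReal.tendsto_ofReal t1
    rw [ENNReal.ofReal_zero] at t2
    have t3 := ENNReal.Tendsto.mul_const (b := 2 * (ENNReal.ofReal (2 * A) *
      ENNReal.ofReal (2 * A))) t2 (Or.inr (ENNReal.mul_lt_top (by simp)
        (ENNReal.mul_lt_top ENNReal.ofReal_lt_top ENNReal.ofReal_lt_top)).ne)
    have t4 := ENNReal.Tendsto.const_mul (a := ENNReal.ofReal (1 / (4 * π))) t3
      (Or.inr ENNReal.ofReal_ne_top)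
    simpa [hr] using t4
  have hbound : ∀ᶠ T in atTop, Einf h ((c - a) / (2 * π)) ≤
      ENNReal.ofReal (M ^ 4) * (energy h φ₁ + energy h φ₂) + r T := by
    filter_upwards [eventually_gt_atTop (2 * A)] with T hT
    have hE := energy_glue_le h0 c₁ hT (cos_of_mem h0 hb) h1p
      (fun x hx => by rw [h1m x hx, cos_of_mem h0 ha]) h2m
      (fun x hx => by rw [h2p x hx, cos_of_mem h0 hc])
    have hE' : energy h (fun x => ψ₁ x + (ψ₂ (x - T) - b)) ≤
        ENNReal.ofReal (M ^ 4) * (energy h φ₁ + energy h φ₂) + r T := by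
      refine hE.trans (add_le_add ?_ le_rfl)
      rw [mul_add]
      exact add_le_add en₁ en₂
    have P : Phase h (fun x => ψ₁ x + (ψ₂ (x - T) - b)) a c := by
      refine ⟨c₁.add ((c₂.comp (contDiff_id.sub contDiff_const)).sub contDiff_const), ?_, ?_,
        hE'.trans_lt (ENNReal.add_lt_top.2 ⟨ENNReal.mul_lt_top ENNReal.ofReal_lt_top
          (ENNReal.add_lt_top.2 ⟨P₁.finite, P₂.finite⟩), hrtop T⟩)⟩
      · refine tendsto_const_nhds.congr' ?_
        filter_upwards [eventually_le_atBot (-A), eventually_le_atBot (T - A)] with x hx hx'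
        rw [h1m x hx, h2m (x - T) (by linarith)]; ring
      · refine tendsto_const_nhds.congr' ?_
        filter_upwards [eventually_ge_atTop A, eventually_ge_atTop (T + A)] with x hx hx'
        rw [h1p x hx, h2p (x - T) (by linarith)]; ring
    exact (iInf₂_le _ (P.mem_AA ha hc)).trans hE'
  have hlim := hr0.const_add (ENNReal.ofReal (M ^ 4) * (energy h φ₁ + energy h φ₂))
  rw [add_zero] at hlim
  exact ge_of_tendsto hlim hbound

/-- The limit `M → 1` in `Einf_le_of_collapse`. -/
lemma Einf_le_of_match {h : ℝ} (h0 : 0 ≤ h) {φ₁ φ₂ : ℝ → ℝ} {a b c : ℝ}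
    (P₁ : Phase h φ₁ a b) (P₂ : Phase h φ₂ b c) (ha : a ∈ limSet h) (hb : b ∈ limSet h)
    (hc : c ∈ limSet h) :
    Einf h ((c - a) / (2 * π)) ≤ energy h φ₁ + energy h φ₂ := by
  have hfin : energy h φ₁ + energy h φ₂ ≠ ⊤ :=
    (ENNReal.add_lt_top.2 ⟨P₁.finite, P₂.finite⟩).ne
  have t1 : Tendsto (fun M : ℝ => ENNReal.ofReal (M ^ 4)) (𝓝[>] 1) (𝓝 (ENNReal.ofReal (1 ^ 4))) :=
    ENNReal.tendsto_ofReal ((continuous_pow 4).tendsto 1 |>.mono_left nhdsWithin_le_nhds)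
  have t2 := ENNReal.Tendsto.mul_const (b := energy h φ₁ + energy h φ₂) t1 (Or.inr hfin)
  rw [one_pow, ENNReal.ofReal_one, one_mul] at t2
  refine ge_of_tendsto t2 ?_
  filter_upwards [self_mem_nhdsWithin] with M hM
  exact Einf_le_of_collapse h0 P₁ P₂ ha hb hc hM

/-! ### Matching the end values -/

lemma mem_limSet_iff {h L : ℝ} : L ∈ limSet h ↔
    ∃ (n e : ℤ), (e = 1 ∨ e = -1) ∧ L = n * (2 * π) + e * alphaParam h := by
  constructor
  · rintro ⟨n, rfl | rfl⟩
    · exact ⟨n, 1, Or.inl rfl, by push_cast; ring⟩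
    · exact ⟨n, -1, Or.inr rfl, by push_cast; ring⟩
  · rintro ⟨n, e, rfl | rfl, rfl⟩
    · exact ⟨n, Or.inl (by push_cast; ring)⟩
    · exact ⟨n, Or.inr (by push_cast; ring)⟩

lemma neg_mem_limSet {h L : ℝ} (hL : L ∈ limSet h) : -L ∈ limSet h := by
  obtain ⟨n, e, he, rfl⟩ := mem_limSet_iff.1 hL
  refine mem_limSet_iff.2 ⟨-n, -e, by omega, by push_cast; ring⟩

lemma add_mem_limSet {h L : ℝ} (hL : L ∈ limSet h) (m : ℤ) : L + m * (2 * π) ∈ limSet h := by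
  obtain ⟨n, e, he, rfl⟩ := mem_limSet_iff.1 hL
  exact mem_limSet_iff.2 ⟨n + m, e, he, by push_cast; ring⟩

lemma Einf_le_of_match_mod {h : ℝ} (h0 : 0 ≤ h) {φ₁ φ₂ : ℝ → ℝ} {a b b' c : ℝ}
    (P₁ : Phase h φ₁ a b) (P₂ : Phase h φ₂ b' c) (ha : a ∈ limSet h) (hb : b ∈ limSet h)
    (hc : c ∈ limSet h) (n : ℤ) (hn : b = b' + n * (2 * π)) :
    Einf h ((b - a) / (2 * π) + (c - b') / (2 * π)) ≤ energy h φ₁ + energy h φ₂ := by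
  have P := P₂.add_two_pi n
  rw [← hn] at P
  have := Einf_le_of_match h0 P₁ P ha hb (add_mem_limSet hc n)
  rw [energy_add_two_pi] at this
  rwa [show (c + n * (2 * π) - a) / (2 * π) = (b - a) / (2 * π) + (c - b') / (2 * π) by
    rw [hn]; ring] at this

/-- Both pieces turn through `2fα` modulo `2π`; their sum is an admissible winding number only for
three values of `α`. -/
lemma alpha_cases {h : ℝ} (h0 : 0 ≤ h) {f N : ℤ} (hf : f = 1 ∨ f = -1)
    (hd : (N : ℝ) + 2 * f * (alphaParam h / π) ∈ Dset h) :
    alphaParam h = 0 ∨ alphaParam h = π / 2 ∨ alphaParam h = π / 3 := by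
  -- `(2f - j) x` is an integer, with `1 ≤ |2f - j| ≤ 3` and `0 ≤ x ≤ 1/2`
  obtain ⟨n, j, hj, hd⟩ := hd
  set x := alphaParam h / π with hx
  have hπ := pi_pos
  have hα : alphaParam h = x * π := by rw [hx]; field_simp
  have hx0 : 0 ≤ x := div_nonneg (alpha_nonneg h) hπ.le
  have hx1 : x ≤ 1 / 2 := by
    rw [hx, div_le_iff₀ hπ]; linarith [alpha_le h0]
  have hd' : ((2 * f - j : ℤ) : ℝ) * x = ((n - N : ℤ) : ℝ) := by
    rw [mul_div_assoc, ← hx] at hd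
    push_cast; linarith
  have hcase : x = 0 ∨ x = 1 / 2 ∨ x = 1 / 3 := by
    obtain ⟨m, q, hm, hmq⟩ : ∃ m q : ℤ, (m = 1 ∨ m = 2 ∨ m = 3) ∧ (m : ℝ) * x = q := by
      rcases hf with rfl | rfl
      · exact ⟨2 * 1 - j, n - N, by omega, hd'⟩
      · refine ⟨-(2 * -1 - j), -(n - N), by omega, ?_⟩
        push_cast at hd' ⊢
        linarith
    have hq0 : 0 ≤ q := by
      have : (0 : ℝ) ≤ q := by
        rw [← hmq]
        refine mul_nonneg ?_ hx0
        exact_mod_cast (show (0 : ℤ) ≤ m by omega)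
      exact_mod_cast this
    have hq1 : q ≤ 1 := by
      have : (q : ℝ) < 2 := by
        rw [← hmq]
        have hm3 : (m : ℝ) ≤ 3 := by exact_mod_cast (show m ≤ 3 by omega)
        nlinarith
      have : q < 2 := by exact_mod_cast this
      omega
    obtain rfl | rfl : q = 0 ∨ q = 1 := by omega
    · left
      rcases hm with rfl | rfl | rfl <;> · push_cast at hmq; linarith
    · rcases hm with rfl | rfl | rfl
      · push_cast at hmq; linarith
      · right; left; push_cast at hmq; linarith
      · right; right; push_cast at hmq; linarith
  rcases hcase with h' | h' | h'
  · left; rw [hα, h', zero_mul]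
  · right; left; rw [hα, h']; ring
  · right; right; rw [hα, h']; ring

/-- `α = π/2` means `k = 0`, that is, no external field. -/
lemma eq_zero_of_alpha {h : ℝ} (h0 : 0 ≤ h) (hα : alphaParam h = π / 2) : h = 0 := by
  have hk := cos_alpha h0
  rw [hα, cos_pi_div_two] at hk
  rcases min_choice h 1 with h' | h'
  · rw [kparam, h'] at hk; exact hk.symm
  · rw [kparam, h'] at hk; norm_num at hk

/-- The ends `e α` and `f α` of the two phases modulo `2π` match if `f₁ = e₂`, or after a reflection
of a phase whose two ends have the same sign; what remains is settled by `alpha_cases`. -/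
lemma Einf_le_of_phases {h : ℝ} (h0 : 0 ≤ h) {φ₁ φ₂ : ℝ → ℝ} {a₁ b₁ a₂ b₂ d₁ d₂ : ℝ}
    (P₁ : Phase h φ₁ a₁ b₁) (P₂ : Phase h φ₂ a₂ b₂) (ha₁ : a₁ ∈ limSet h) (hb₁ : b₁ ∈ limSet h)
    (ha₂ : a₂ ∈ limSet h) (hb₂ : b₂ ∈ limSet h) (hd₁ : d₁ = (b₁ - a₁) / (2 * π))
    (hd₂ : d₂ = (b₂ - a₂) / (2 * π)) (hd : d₁ + d₂ ∈ Dset h)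
    (hextra : alphaParam h = π / 3 → (∃ m : ℤ, d₂ - d₁ = (m : ℝ)) →
      ∃ m : ℤ, d₁ + d₂ = (m : ℝ)) :
    Einf h (d₁ + d₂) ≤ energy h φ₁ + energy h φ₂ := by
  obtain ⟨n₁, e₁, he₁, hn₁⟩ := mem_limSet_iff.1 ha₁
  obtain ⟨m₁, f₁, hf₁, hm₁⟩ := mem_limSet_iff.1 hb₁
  obtain ⟨n₂, e₂, he₂, hn₂⟩ := mem_limSet_iff.1 ha₂
  obtain ⟨m₂, f₂, hf₂, hm₂⟩ := mem_limSet_iff.1 hb₂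
  have hπ : π ≠ 0 := pi_ne_zero
  by_cases c1 : f₁ = e₂
  · rw [hd₁, hd₂]
    refine Einf_le_of_match_mod h0 P₁ P₂ ha₁ hb₁ hb₂ (m₁ - n₂) ?_
    rw [hm₁, hn₂, c1]; push_cast; ring
  by_cases c2 : e₁ = f₁
  · have := Einf_le_of_match_mod h0 P₁.reflect P₂ (neg_mem_limSet hb₁) (neg_mem_limSet ha₁) hb₂
      (-n₁ - n₂) (by
        rw [hn₁, hn₂, show e₂ = -e₁ by omega]; push_cast; ring)
    rw [energy_reflect] at this
    rw [hd₁, hd₂]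
    convert this using 3
    ring
  by_cases c3 : e₂ = f₂
  · have := Einf_le_of_match_mod h0 P₁ P₂.reflect ha₁ hb₁ (neg_mem_limSet ha₂)
      (m₁ + m₂) (by
        rw [hm₁, hm₂, show f₂ = -f₁ by omega]; push_cast; ring)
    rw [energy_reflect] at this
    rw [hd₁, hd₂]
    convert this using 3
    ring
  -- both phases connect `-f₁ α` to `f₁ α` modulo `2π`
  obtain rfl : e₁ = -f₁ := by omega
  obtain rfl : e₂ = -f₁ := by omega
  obtain rfl : f₂ = f₁ := by omega
  have v₁ : d₁ = ((m₁ - n₁ : ℤ) : ℝ) + f₂ * (alphaParam h / π) := by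
    rw [hd₁, hm₁, hn₁]; push_cast; field_simp; ring
  have v₂ : d₂ = ((m₂ - n₂ : ℤ) : ℝ) + f₂ * (alphaParam h / π) := by
    rw [hd₂, hm₂, hn₂]; push_cast; field_simp; ring
  have hd' : d₁ + d₂ = ((m₁ - n₁ + (m₂ - n₂) : ℤ) : ℝ) + 2 * f₂ * (alphaParam h / π) := by
    rw [v₁, v₂]; push_cast; ring
  -- in the three cases: `fα = -fα`; a half turn of `φ₂`; a winding number in `ℤ ± 2/3`
  rcases alpha_cases h0 hf₁ (hd' ▸ hd) with hα | hα | hα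
  · rw [hd₁, hd₂]
    refine Einf_le_of_match_mod h0 P₁ P₂ ha₁ hb₁ hb₂ (m₁ - n₂) ?_
    rw [hm₁, hn₂, hα]; push_cast; ring
  · obtain rfl := eq_zero_of_alpha h0 hα
    have hmem : b₂ + π ∈ limSet 0 := by
      rw [mem_limSet_iff, hm₂, hα]
      rcases hf₂ with rfl | rfl
      · exact ⟨m₂ + 1, -1, Or.inr rfl, by push_cast; ring⟩
      · exact ⟨m₂, 1, Or.inl rfl, by push_cast; ring⟩
    have key : ∃ n : ℤ, b₁ = a₂ + π + n * (2 * π) := by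
      rw [hm₁, hn₂, hα]
      rcases hf₂ with rfl | rfl
      · exact ⟨m₁ - n₂, by push_cast; ring⟩
      · exact ⟨m₁ - n₂ - 1, by push_cast; ring⟩
    obtain ⟨n, hn⟩ := key
    have := Einf_le_of_match_mod h0 P₁ P₂.add_pi ha₁ hb₁ hmem n hn
    rw [energy_add_pi, add_sub_add_right_eq_sub] at this
    rwa [hd₁, hd₂]
  · exfalso
    obtain ⟨m, hm⟩ := hextra hα ⟨m₂ - n₂ - (m₁ - n₁), by rw [v₁, v₂]; push_cast; ring⟩
    rw [hd', hα, show π / 3 / π = 1 / 3 by field_simp] at hm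
    have h3 : ((3 * (m₁ - n₁ + (m₂ - n₂)) + 2 * f₂ : ℤ) : ℝ) = ((3 * m : ℤ) : ℝ) := by
      push_cast at hm ⊢; linarith
    have h3 : 3 * (m₁ - n₁ + (m₂ - n₂)) + 2 * f₂ = 3 * m := by exact_mod_cast h3
    omega

/-- **Subadditivity of `ℰ_h`.** -/
theorem Einf_subadditive (h : ℝ) (h0 : 0 ≤ h) (h1 : h ≠ 1) (d₁ d₂ d : ℝ)
    (hd₁ : d₁ ∈ Dset h) (hd₂ : d₂ ∈ Dset h) (hd : d ∈ Dset h)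
    (hsum : d = d₁ + d₂)
    (hextra : alphaParam h = Real.pi/3 → (∃ m : ℤ, d₂ - d₁ = (m : ℝ)) →
      ∃ m : ℤ, d = (m : ℝ)) :
    Einf h d ≤ Einf h d₁ + Einf h d₂ := by
  subst hsum
  simp only [Einf, ENNReal.iInf_add, ENNReal.add_iInf]
  refine le_iInf fun φ₂ => le_iInf fun hφ₂ => le_iInf fun φ₁ => le_iInf fun hφ₁ => ?_
  obtain ⟨⟨s₁, ⟨b₁, hb₁, t₁⟩, ⟨a₁, ha₁, u₁⟩, w₁⟩, g₁⟩ := hφ₁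
  obtain ⟨⟨s₂, ⟨b₂, hb₂, t₂⟩, ⟨a₂, ha₂, u₂⟩, w₂⟩, g₂⟩ := hφ₂
  have P₁ : Phase h φ₁ a₁ b₁ := ⟨s₁, u₁, t₁, w₁⟩
  have P₂ : Phase h φ₂ a₂ b₂ := ⟨s₂, u₂, t₂, w₂⟩
  exact Einf_le_of_phases h0 P₁ P₂ ha₁ hb₁ ha₂ hb₂ (g₁.symm.trans P₁.deg_eq)
    (g₂.symm.trans P₂.deg_eq) hd hextra
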